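/- arXiv:2204.05974 — 6 statements merged into one kernel-verified Lean document; each statement's English description precedes it below -/
import Mathlib

section
/- There exists a totally disconnected Tychonoff space T such that for every nonempty separable metric space M, the space C_p(T, M) is a Baire space if, and only if, M is a Peano continuum. -/
open Set Topology

/-- `Cp X Y` : continuous functions from `X` to `Y` with the topology of pointwise
convergence, i.e. the subspace topology inherited from the product space `Y^X`. -/
abbrev Cp (X Y : Type*) [TopologicalSpace X] [TopologicalSpace Y] : Type _ :=
  {f : X → Y // Continuous f}

namespace CpBaire

/-- A code is a finite set of conditions; `Ocode` is the corresponding basic open set. -/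
def Ocode {T ι : Type} {X : ι → Type} (e : T → ∀ i, X i) (b : ∀ i, ℕ → Set (X i))
    (c : Finset (ι × ℕ)) : Set T := {t | ∀ p ∈ c, e t p.1 ∈ b p.1 p.2}

theorem exists_code {T ι M : Type} {X : ι → Type} [∀ i, TopologicalSpace (X i)]
    [TopologicalSpace T] [TopologicalSpace M]
    (e : T → ∀ i, X i) (he : IsInducing e) (b : ∀ i, ℕ → Set (X i))
    (hb : ∀ i, TopologicalSpace.IsTopologicalBasis (range (b i)))
    (f : T → M) (hf : Continuous f) (t : T) (V : Set M) (hV : IsOpen V) (ht : f t ∈ V) :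
    ∃ c, t ∈ Ocode e b c ∧ ∀ s ∈ Ocode e b c, f s ∈ V := by
  classical
  have h1 : f ⁻¹' V ∈ 𝓝 t := (hV.preimage hf).mem_nhds ht
  rw [he.nhds_eq_comap, Filter.mem_comap] at h1
  obtain ⟨U, hU, hUV⟩ := h1
  rw [nhds_pi, Filter.mem_pi] at hU
  obtain ⟨I, hI, s, hs, hsU⟩ := hU
  have h2 : ∀ i, ∃ n, e t i ∈ b i n ∧ b i n ⊆ s i := by
    intro i
    obtain ⟨_, ⟨n, rfl⟩, h⟩ := (hb i).mem_nhds_iff.1 (hs i)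
    exact ⟨n, h⟩
  choose n hn1 hn2 using h2
  refine ⟨hI.toFinset.image (fun i => (i, n i)), ?_, ?_⟩
  · intro p hp
    simp only [Finset.mem_image] at hp
    obtain ⟨i, _, rfl⟩ := hp
    exact hn1 i
  · intro u hu
    apply hUV
    apply hsU
    intro i hi
    apply hn2
    exact hu (i, n i) (Finset.mem_image.2 ⟨i, by simpa using hi, rfl⟩)

theorem exists_closed_countable {ι : Type} (w : Finset (ι × ℕ) → ℕ → Finset (ι × ℕ)) :
    ∃ C : Set ι, C.Countable ∧ ∀ c : Finset (ι × ℕ), (∀ p ∈ c, p.1 ∈ C) →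
      ∀ n, ∀ p ∈ w c n, p.1 ∈ C := by
  let S : Set ι → Set (Finset (ι × ℕ)) := fun C => {c | (c : Set (ι × ℕ)) ⊆ C ×ˢ univ}
  have hS : ∀ C : Set ι, C.Countable → (S C).Countable := by
    intro C hC
    have h := Set.countable_ofPred_finite_subset (hC.prod (countable_univ (α := ℕ)))
    refine (h.preimage_of_injOn (f := fun c : Finset (ι × ℕ) => (c : Set (ι × ℕ)))
      Finset.coe_injective.injOn).mono ?_
    intro c hc
    exact ⟨c.finite_toSet, hc⟩
  let step : Set ι → Set ι := fun C => C ∪ ⋃ c ∈ S C, ⋃ n, Prod.fst '' (w c n : Set (ι × ℕ))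
  have hstep : ∀ C : Set ι, C.Countable → (step C).Countable := by
    intro C hC
    refine hC.union ((hS C hC).biUnion fun c _ => countable_iUnion fun n => ?_)
    exact ((w c n).finite_toSet.image _).countable
  let D : ℕ → Set ι := fun k => step^[k] ∅
  have hD : ∀ k, (D k).Countable := by
    intro k
    induction k with
    | zero => exact countable_empty
    | succ k ih =>
      simp only [D, Function.iterate_succ', Function.comp]
      exact hstep _ ih
  have hsucc : ∀ k, D (k+1) = step (D k) := by
    intro k
    simp only [D, Function.iterate_succ', Function.comp]
  have hmono : Monotone D := by
    refine monotone_nat_of_le_succ fun k => ?_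
    rw [hsucc]
    exact subset_union_left
  refine ⟨⋃ k, D k, countable_iUnion hD, ?_⟩
  intro c hc n p hp
  have h : ∃ k, (c : Set (ι × ℕ)) ⊆ D k ×ˢ univ := by
    have h3 : (c : Set (ι × ℕ)) ⊆ ⋃ k, D k ×ˢ (univ : Set ℕ) := by
      intro p hp
      obtain ⟨k, hk⟩ := mem_iUnion.1 (hc p hp)
      exact mem_iUnion.2 ⟨k, hk, trivial⟩
    have hdir : Directed (· ⊆ ·) (fun k => D k ×ˢ (univ : Set ℕ)) := by
      apply Monotone.directed_le
      intro a b hab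
      exact prod_mono (hmono hab) subset_rfl
    exact hdir.exists_mem_subset_of_finset_subset_biUnion h3
  obtain ⟨k, hk⟩ := h
  refine mem_iUnion.2 ⟨k+1, ?_⟩
  rw [hsucc]
  right
  simp only [mem_iUnion]
  exact ⟨c, hk, n, p, hp, rfl⟩

theorem exists_dep {T ι M : Type} {X : ι → Type} [∀ i, TopologicalSpace (X i)]
    [TopologicalSpace T] [TopologicalSpace M] [T2Space M] [SecondCountableTopology M]
    (e : T → ∀ i, X i) (he : IsInducing e) (b : ∀ i, ℕ → Set (X i))
    (hb : ∀ i, TopologicalSpace.IsTopologicalBasis (range (b i)))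
    (hd : ∀ C : Set ι, C.Countable → ∀ z : ∀ i, X i, ∃ t, ∀ i ∈ C, e t i = z i)
    (f : T → M) (hf : Continuous f) :
    ∃ C : Set ι, C.Countable ∧ ∀ t t', (∀ i ∈ C, e t i = e t' i) → f t = f t' := by
  classical
  obtain ⟨B, hBc, -, hB⟩ := TopologicalSpace.exists_countable_basis M
  rcases isEmpty_or_nonempty T with hT | ⟨⟨t0⟩⟩
  · exact ⟨∅, countable_empty, fun t => hT.elim t⟩
  have hBne : B.Nonempty := by
    obtain ⟨V, hV, -⟩ := hB.mem_nhds_iff.1 (Filter.univ_mem (f := 𝓝 (f t0)))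
    exact ⟨V, hV⟩
  obtain ⟨β, rfl⟩ := hBc.exists_eq_range hBne
  let good : Finset (ι × ℕ) → ℕ → Finset (ι × ℕ) → Prop := fun c n w =>
    c ⊆ w ∧ (Ocode e b w).Nonempty ∧ ∀ s ∈ Ocode e b w, f s ∈ β n
  let w : Finset (ι × ℕ) → ℕ → Finset (ι × ℕ) := fun c n =>
    if h : ∃ w, good c n w then h.choose else ∅
  have hw : ∀ c n, (∃ w, good c n w) → good c n (w c n) := by
    intro c n h
    simp only [w, dif_pos h]
    exact h.choose_spec
  obtain ⟨C, hC, hCw⟩ := exists_closed_countable w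
  refine ⟨C, hC, fun t t' htt => ?_⟩
  by_contra hne
  obtain ⟨V, V', hV, hV', htV, htV', hdisj⟩ := t2_separation hne
  obtain ⟨_, ⟨n, rfl⟩, hn1, hn2⟩ := hB.mem_nhds_iff.1 (hV.mem_nhds htV)
  obtain ⟨c, htc, hc⟩ := exists_code e he b hb f hf t (β n) (hB.isOpen (mem_range_self n)) hn1
  obtain ⟨c', htc', hc'⟩ := exists_code e he b hb f hf t' V' hV' htV'
  let d := c'.filter (fun p => p.1 ∈ C)
  have hgood : ∃ w, good d n w := by
    refine ⟨c ∪ d, Finset.subset_union_right, ⟨t, ?_⟩, ?_⟩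
    · intro p hp
      rcases Finset.mem_union.1 hp with hp | hp
      · exact htc p hp
      · have := Finset.mem_filter.1 hp
        rw [htt _ this.2]
        exact htc' p this.1
    · intro s hs
      exact hc s fun p hp => hs p (Finset.mem_union_left _ hp)
  obtain ⟨g1, ⟨s, hs⟩, g3⟩ := hw d n hgood
  have hwC := hCw d (fun p hp => (Finset.mem_filter.1 hp).2) n
  obtain ⟨u, hu⟩ := hd (C ∪ Prod.fst '' (c' : Set (ι × ℕ)))
    (hC.union (c'.finite_toSet.image _).countable)
    (fun i => if i ∈ C then e s i else e t' i)
  have hu1 : u ∈ Ocode e b (w d n) := by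
    intro p hp
    have hpC := hwC p hp
    rw [hu _ (Or.inl hpC), if_pos hpC]
    exact hs p hp
  have hu2 : u ∈ Ocode e b c' := by
    intro p hp
    by_cases hpC : p.1 ∈ C
    · exact hu1 p (g1 (Finset.mem_filter.2 ⟨hp, hpC⟩))
    · rw [hu _ (Or.inr ⟨p, hp, rfl⟩), if_neg hpC]
      exact htc' p hp
  exact Set.disjoint_left.1 hdisj (hn2 (g3 u hu1)) (hc' u hu2)

theorem exists_ext {T ι M : Type} {X : ι → Type} [∀ i, TopologicalSpace (X i)]
    [∀ i, SecondCountableTopology (X i)] [∀ i, Nonempty (X i)]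
    [TopologicalSpace T] [TopologicalSpace M] [T2Space M] [SecondCountableTopology M]
    (e : T → ∀ i, X i) (he : IsInducing e)
    (hd : ∀ C : Set ι, C.Countable → ∀ z : ∀ i, X i, ∃ t, ∀ i ∈ C, e t i = z i)
    (f : T → M) (hf : Continuous f) :
    ∃ F : (∀ i, X i) → M, Continuous F ∧ ∀ t, F (e t) = f t := by
  classical
  have hb : ∀ i, ∃ b : ℕ → Set (X i), TopologicalSpace.IsTopologicalBasis (range b) := by
    intro i
    obtain ⟨B, hBc, -, hB⟩ := TopologicalSpace.exists_countable_basis (X i)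
    have hBne : B.Nonempty := by
      obtain ⟨V, hV, -⟩ := hB.mem_nhds_iff.1 (Filter.univ_mem (f := 𝓝 (Classical.arbitrary (X i))))
      exact ⟨V, hV⟩
    obtain ⟨β, rfl⟩ := hBc.exists_eq_range hBne
    exact ⟨β, hB⟩
  choose b hb using hb
  obtain ⟨C, hC, hdep⟩ := exists_dep e he b hb hd f hf
  choose τ hτ using hd C hC
  refine ⟨fun z => f (τ z), ?_, fun t => hdep _ _ (hτ (e t))⟩
  rw [continuous_iff_continuousAt]
  intro z
  rw [ContinuousAt, (nhds_basis_opens _).tendsto_right_iff]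
  rintro V ⟨hzV, hV⟩
  obtain ⟨c, htc, hc⟩ := exists_code e he b hb f hf (τ z) V hV hzV
  have hN : ∀ᶠ z' in 𝓝 z, ∀ p ∈ c.filter (fun p => p.1 ∈ C), z' p.1 ∈ b p.1 p.2 := by
    rw [Filter.eventually_all_finset]
    intro p hp
    have hp := Finset.mem_filter.1 hp
    refine (continuous_apply p.1).continuousAt.eventually
      (((hb p.1).isOpen (mem_range_self p.2)).mem_nhds ?_)
    have h5 := htc p hp.1
    rwa [hτ z _ hp.2] at h5
  filter_upwards [hN] with z' hz'
  obtain ⟨u, hu⟩ := hd (C ∪ Prod.fst '' (c : Set (ι × ℕ)))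
    (hC.union (c.finite_toSet.image _).countable)
    (fun i => if i ∈ C then z' i else e (τ z) i)
  have h1 : f (τ z') = f u := by
    apply hdep
    intro i hi
    rw [hτ z' i hi, hu i (Or.inl hi), if_pos hi]
  rw [h1]
  apply hc
  intro p hp
  by_cases hpC : p.1 ∈ C
  · rw [hu _ (Or.inl hpC), if_pos hpC]
    exact hz' p (Finset.mem_filter.2 ⟨hp, hpC⟩)
  · rw [hu _ (Or.inr ⟨p, hp, rfl⟩), if_neg hpC]
    exact htc p hp

end CpBaire

namespace CpBaire
/-- Part (a): countable extension property implies Baire. -/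
theorem baire_of_ext {T M : Type} [TopologicalSpace T] [TopologicalSpace M] [T2Space M]
    [CompactSpace M]
    (hext : ∀ A : Set T, A.Countable → ∀ g : T → M, ∃ f : T → M, Continuous f ∧ ∀ t ∈ A, f t = g t) :
    BaireSpace (Cp T M) := by
  -- nbhds of x in the product contain all points that agree with x on a finite set
  have hfin : ∀ (W : Set (T → M)), IsOpen W → ∀ x ∈ W, ∃ S : Set T, S.Countable ∧
      ∀ y : T → M, (∀ t ∈ S, y t = x t) → y ∈ W := by
    intro W hW x hx
    have h := hW.mem_nhds hx
    rw [nhds_pi, Filter.mem_pi] at h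
    obtain ⟨I, hI, s, hs, hsU⟩ := h
    refine ⟨I, hI.countable, fun y hy => hsU fun i hi => ?_⟩
    rw [hy i hi]
    exact mem_of_mem_nhds (hs i)
  have hQ : Dense {f : T → M | Continuous f} := by
    rw [dense_iff_inter_open]
    rintro W hW ⟨x, hx⟩
    obtain ⟨S, hS, h⟩ := hfin W hW x hx
    obtain ⟨f, hf, hfx⟩ := hext S hS x
    exact ⟨f, h f hfx, hf⟩
  refine ⟨fun D hDo hDd => ?_⟩
  have hW : ∀ n, ∃ W : Set (T → M), IsOpen W ∧ Subtype.val ⁻¹' W = D n := fun n =>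
    isOpen_induced_iff.1 (hDo n)
  choose W hWo hWD using hW
  have hWd : ∀ n, Dense (W n) := by
    intro n
    rw [dense_iff_inter_open]
    rintro U hU hUne
    obtain ⟨q, hqU, hq⟩ := hQ.inter_open_nonempty U hU hUne
    obtain ⟨p, hp1, hp2⟩ := (hDd n).inter_open_nonempty (Subtype.val ⁻¹' U)
      (hU.preimage continuous_subtype_val) ⟨⟨q, hq⟩, hqU⟩
    rw [← hWD n] at hp2
    exact ⟨p.1, hp1, hp2⟩
  have hd := dense_iInter_of_isOpen hWo hWd
  rw [dense_iff_inter_open]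
  rintro U' hU' ⟨q, hq⟩
  obtain ⟨U, hU, rfl⟩ := isOpen_induced_iff.1 hU'
  obtain ⟨x, hxU, hxW⟩ := hd.inter_open_nonempty U hU ⟨q.1, hq⟩
  rw [mem_iInter] at hxW
  obtain ⟨S, hS, hSU⟩ := hfin U hU x hxU
  choose R hR hRW using fun n => hfin (W n) (hWo n) x (hxW n)
  obtain ⟨f, hf, hfx⟩ := hext (S ∪ ⋃ n, R n) (hS.union (countable_iUnion hR)) x
  refine ⟨⟨f, hf⟩, hSU f fun t ht => hfx t (Or.inl ht), mem_iInter.2 fun n => ?_⟩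
  rw [← hWD n]
  exact hRW n f fun t ht => hfx t (Or.inr (mem_iUnion.2 ⟨n, ht⟩))

/-- Generic function: its values at the tail of any given injective sequence are dense. -/
theorem exists_generic {T M : Type} [TopologicalSpace T] [MetricSpace M]
    [SecondCountableTopology M] [Nonempty M] [TotallySeparatedSpace T] [BaireSpace (Cp T M)]
    (z : ℕ → T) (hz : Function.Injective z) :
    ∃ f : T → M, Continuous f ∧ ∀ k : ℕ, ∀ V : Set M, IsOpen V → V.Nonempty →
      ∃ n, k ≤ n ∧ f (z n) ∈ V := by
  classical
  obtain ⟨B, hBc, hBe, hB⟩ := TopologicalSpace.exists_countable_basis M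
  have : Countable B := hBc
  let D : ℕ × B → Set (Cp T M) := fun p => {f | ∃ n, p.1 ≤ n ∧ f.1 (z n) ∈ p.2.1}
  have hDo : ∀ p, IsOpen (D p) := by
    intro p
    have : D p = ⋃ n, ⋃ _ : p.1 ≤ n, {f : Cp T M | f.1 (z n) ∈ p.2.1} := by
      ext f; simp [D]
    rw [this]
    refine isOpen_iUnion fun n => isOpen_iUnion fun _ => ?_
    exact (hB.isOpen p.2.2).preimage ((continuous_apply (z n)).comp continuous_subtype_val)
  have hDd : ∀ p, Dense (D p) := by
    rintro ⟨k, V, hV⟩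
    rw [dense_iff_inter_open]
    rintro U' hU' ⟨q, hq⟩
    obtain ⟨U, hU, rfl⟩ := isOpen_induced_iff.1 hU'
    have h := hU.mem_nhds hq
    rw [nhds_pi, Filter.mem_pi] at h
    obtain ⟨I, hI, s, hs, hsU⟩ := h
    obtain ⟨n, hn, hnI⟩ : ∃ n, k ≤ n ∧ z n ∉ I := by
      have h1 : (z ⁻¹' I).Finite := hI.preimage hz.injOn
      obtain ⟨n, hn⟩ := (h1.union (finite_lt_nat k)).infinite_compl.nonempty
      simp at hn
      exact ⟨n, hn.2, hn.1⟩
    have hcl : ∀ t : T, t ∈ I → ∃ K : Set T, IsClopen K ∧ z n ∈ K ∧ t ∉ K := by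
      intro t ht
      have hne : z n ≠ t := by rintro rfl; exact hnI ht
      obtain ⟨K, hK, h1, h2⟩ := exists_isClopen_of_totally_separated hne
      exact ⟨K, hK, h1, h2⟩
    choose! K hK hzK htK using hcl
    let L := ⋂ t ∈ I, K t
    have hL : IsClopen L := hI.isClopen_biInter fun t ht => hK t ht
    obtain ⟨y, hy⟩ : V.Nonempty := nonempty_iff_ne_empty.2 fun h => hBe (h ▸ hV)
    let g : T → M := L.piecewise (fun _ => y) q.1
    have hg : Continuous g := by
      apply Continuous.piecewise _ continuous_const q.2
      simp [hL.frontier_eq]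
    refine ⟨⟨g, hg⟩, hsU fun i hi => ?_, n, hn, ?_⟩
    · have : i ∉ L := fun h => htK i hi (mem_iInter₂.1 h i hi)
      simp only [g, Set.piecewise_eq_of_notMem _ _ _ this]
      exact mem_of_mem_nhds (hs i)
    · have : z n ∈ L := mem_iInter₂.2 fun t ht => hzK t ht
      simp only [g, Set.piecewise_eq_of_mem _ _ _ this]
      exact hy
  have hd := dense_iInter_of_isOpen hDo hDd
  have : Nonempty (Cp T M) := ⟨⟨fun _ => Classical.arbitrary M, continuous_const⟩⟩
  obtain ⟨f, hf⟩ := hd.nonempty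
  refine ⟨f.1, f.2, fun k V hV ⟨y, hy⟩ => ?_⟩
  obtain ⟨V', hV', hyV', hV'V⟩ := hB.mem_nhds_iff.1 (hV.mem_nhds hy)
  obtain ⟨n, hn, hnv⟩ := mem_iInter.1 hf (k, ⟨V', hV'⟩)
  exact ⟨n, hn, hV'V hnv⟩

/-- Combination: if the sequence converges to the Peano part, `M` is a Peano continuum. -/
theorem peano_of_factor {ι M T : Type} {X X' : ι → Type} [∀ i, TopologicalSpace (X i)]
    [∀ i, TopologicalSpace (X' i)] [∀ i, CompactSpace (X i)] [∀ i, T1Space (X i)]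
    [∀ i, CompactSpace (X' i)] [∀ i, ConnectedSpace (X' i)] [∀ i, LocallyConnectedSpace (X' i)]
    [MetricSpace M] [TopologicalSpace T]
    (e : T → ∀ i, X i) (incl : ∀ i, X' i → X i) (hi : ∀ i, Continuous (incl i))
    (J : Set ι) (hJ : ∀ i, i ∉ J → Function.Surjective (incl i))
    (z : ℕ → T) (x0 : ∀ i, X' i) (hz : ∀ j ∈ J, ∀ᶠ n in Filter.atTop, e (z n) j = incl j (x0 j))
    (F : (∀ i, X i) → M) (hF : Continuous F)
    (hd : ∀ k : ℕ, ∀ V : Set M, IsOpen V → V.Nonempty →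
      ∃ n, k ≤ n ∧ F (e (z n)) ∈ V) :
    CompactSpace M ∧ ConnectedSpace M ∧ LocallyConnectedSpace M := by
  classical
  let G : (∀ i, X' i) → M := fun x => F (fun i => incl i (x i))
  have hG : Continuous G :=
    hF.comp (continuous_pi fun i => (hi i).comp (continuous_apply i))
  -- the sequence is close to the range of `G`
  have key : ∀ y, ∀ ε > 0, ∃ x, dist (G x) y < ε := by
    intro y ε hε
    let r : (∀ i, X i) → (∀ i, X i) := fun x i => if i ∈ J then incl i (x0 i) else x i
    have hr : Continuous r := by
      refine continuous_pi fun i => ?_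
      by_cases h : i ∈ J
      · simp only [r, if_pos h]; exact continuous_const
      · simp only [r, if_neg h]; exact continuous_apply i
    have hev : ∀ᶠ n in Filter.atTop, dist (F (e (z n))) (F (r (e (z n)))) < ε / 2 := by
      by_contra hcon
      let K : Set (∀ i, X i) := {x | ε / 2 ≤ dist (F x) (F (r x))}
      have hK : IsCompact K := (isClosed_le continuous_const
        (hF.dist (hF.comp hr))).isCompact
      have hfr : ∃ᶠ n in Filter.atTop, e (z n) ∈ K := by
        intro h; apply hcon; filter_upwards [h] with n hn; simpa [K] using hn
      obtain ⟨x, hxK, hx⟩ := hK.exists_mapClusterPt_of_frequently hfr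
      have hxr : x ∈ K → r x ≠ x := by
        intro h h'
        simp only [K, mem_ofPred_eq, h', dist_self] at h
        linarith
      apply hxr hxK
      funext i
      by_cases h : i ∈ J
      · simp only [r, if_pos h]
        by_contra hne
        have h1 : {y : ∀ i, X i | y i ≠ incl i (x0 i)} ∈ 𝓝 x :=
          (isOpen_ne.preimage (continuous_apply i)).mem_nhds (Ne.symm hne)
        have h2 := (mapClusterPt_iff_frequently.1 hx) _ h1
        apply h2
        filter_upwards [hz i h] with n hn
        simp [hn]
      · simp only [r, if_neg h]
    obtain ⟨k, hk⟩ := Filter.eventually_atTop.1 hev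
    obtain ⟨n, hn, hn'⟩ := hd k (Metric.ball y (ε / 2)) Metric.isOpen_ball
      ⟨y, Metric.mem_ball_self (by linarith)⟩
    have : ∃ x, G x = F (r (e (z n))) := by
      have : ∀ i, ∃ x, incl i x = r (e (z n)) i := by
        intro i
        by_cases h : i ∈ J
        · exact ⟨x0 i, by simp [r, h]⟩
        · exact hJ i h _
      choose x hx using this
      exact ⟨x, by simp only [G, hx]⟩
    obtain ⟨x, hx⟩ := this
    refine ⟨x, ?_⟩
    have h1 := hk n hn
    rw [Metric.mem_ball] at hn'
    rw [hx]
    have := dist_triangle_left (F (r (e (z n)))) y (F (e (z n)))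
    linarith
  have hsurj : Function.Surjective G := by
    rw [← range_eq_univ, ← (isCompact_range hG).isClosed.closure_eq]
    ext y
    simp only [mem_univ, iff_true]
    rw [Metric.mem_closure_iff]
    intro ε hε
    obtain ⟨x, hx⟩ := key y ε hε
    exact ⟨G x, mem_range_self x, by rwa [dist_comm]⟩
  refine ⟨?_, hsurj.connectedSpace hG, ?_⟩
  · exact ⟨by rw [← hsurj.range_eq]; exact isCompact_range hG⟩
  · have := (hG.isClosedMap).isQuotientMap hG hsurj
    exact this.isCoinducing.locallyConnectedSpace

end CpBaire

namespace CpBaire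

abbrev HH := ℕ → ℝ

/-- Peano subsets of the countable power of the line. -/
abbrev PS := {P : Set HH // CompactSpace P ∧ ConnectedSpace P ∧ LocallyConnectedSpace P}

/-- Index set of coordinates. -/
abbrev Idx (T : Type) := (PS × (ℕ → T) × (ℕ → HH)) ⊕ (T × T)

abbrev XX (T : Type) : Idx T → Set HH :=
  Sum.elim (fun i => i.1.1) (fun _ => {0, 1})

abbrev XX' (T : Type) : Idx T → Set HH :=
  Sum.elim (fun i => i.1.1) (fun _ => {0})

/-- Countable requirements. -/
abbrev RR (T : Type) := (ℕ → Idx T) × (ℕ → HH)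

theorem XX'_sub {T : Type} (i : Idx T) : XX' T i ⊆ XX T i := by
  rcases i with i | i
  · exact subset_rfl
  · simp [XX, XX']

instance {T : Type} (i : Idx T) : CompactSpace (XX T i) := by
  rcases i with i | i
  · exact i.1.2.1
  · exact isCompact_iff_compactSpace.1 ((finite_singleton _).insert _).isCompact

instance {T : Type} (i : Idx T) : CompactSpace (XX' T i) := by
  rcases i with i | i
  · exact i.1.2.1
  · exact isCompact_iff_compactSpace.1 (finite_singleton _).isCompact

instance {T : Type} (i : Idx T) : ConnectedSpace (XX' T i) := by
  rcases i with i | i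
  · exact i.1.2.2.1
  · exact isConnected_iff_connectedSpace.1 isConnected_singleton

instance {T : Type} (i : Idx T) : LocallyConnectedSpace (XX' T i) := by
  rcases i with i | i
  · exact i.1.2.2.2
  · have : Subsingleton (XX' T (Sum.inr i)) := by
      change Subsingleton ({0} : Set HH)
      infer_instance
    infer_instance

/-- Default point. -/
noncomputable def x0 (T : Type) (i : Idx T) : XX' T i := Classical.arbitrary _

theorem x0_inr {T : Type} (j : T × T) : (x0 T (Sum.inr j)).1 = 0 := (x0 T (Sum.inr j)).2

def incl {T : Type} (i : Idx T) (x : XX' T i) : XX T i := ⟨x.1, XX'_sub i x.2⟩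

instance {T : Type} (i : Idx T) : Nonempty (XX T i) := ⟨incl i (x0 T i)⟩

open Classical in
/-- Generic point determined by a requirement. -/
noncomputable def gen {T : Type} (r : RR T) (i : Idx T) : XX T i :=
  if h : ∃ n, r.1 n = i ∧ r.2 n ∈ XX T i then ⟨r.2 h.choose, h.choose_spec.2⟩
  else incl i (x0 T i)

theorem gen_eq {T : Type} (c : ℕ → Idx T) (z : ∀ i, XX T i) (n : ℕ) :
    gen (c, fun n => (z (c n)).1) (c n) = z (c n) := by
  have h : ∃ m, c m = c n ∧ (z (c m)).1 ∈ XX T (c n) := ⟨n, rfl, (z (c n)).2⟩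
  rw [gen, dif_pos h]
  apply Subtype.ext
  have := h.choose_spec.1
  simp only
  rw [this]

open Classical in
/-- The coordinates of the space. -/
noncomputable def ee {T : Type} (E : T → RR T × T) (t : T) : ∀ i : Idx T, XX T i
  | Sum.inl i => if h : ∃ n, i.2.1 n = t ∧ i.2.2 n ∈ i.1.1 then ⟨i.2.2 h.choose, h.choose_spec.2⟩
      else gen (E t).1 (Sum.inl i)
  | Sum.inr j => if t = j.1 then ⟨0, by simp⟩ else if t = j.2 then ⟨1, by simp⟩ else
      gen (E t).1 (Sum.inr j)

/-- Points where a coordinate is special. -/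
def special {T : Type} : Idx T → Set T
  | Sum.inl i => range i.2.1
  | Sum.inr j => {j.1, j.2}

theorem special_countable {T : Type} (i : Idx T) : (special i).Countable := by
  rcases i with i | i
  · exact countable_range _
  · exact ((finite_singleton _).insert _).countable

theorem ee_gen {T : Type} (E : T → RR T × T) (t : T) (i : Idx T) (h : t ∉ special i) :
    ee E t i = gen (E t).1 i := by
  rcases i with i | i
  · have : ¬ ∃ n, i.2.1 n = t ∧ i.2.2 n ∈ i.1.1 := by
      rintro ⟨n, hn, -⟩
      exact h ⟨n, hn⟩
    simp only [ee, dif_neg this]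
  · simp only [special, mem_insert_iff, mem_singleton_iff, not_or] at h
    simp only [ee, if_neg h.1, if_neg h.2]

theorem ee_dense {T : Type} [Uncountable T] (E : T → RR T × T) (hE : Function.Surjective E)
    (C : Set (Idx T)) (hC : C.Countable) (z : ∀ i, XX T i) : ∃ t, ∀ i ∈ C, ee E t i = z i := by
  rcases C.eq_empty_or_nonempty with rfl | hne
  · exact ⟨Classical.arbitrary T, by simp⟩
  obtain ⟨c, rfl⟩ := hC.exists_eq_range hne
  let r : RR T := (c, fun n => (z (c n)).1)
  have hA : (⋃ n, special (c n)).Countable := countable_iUnion fun n => special_countable _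
  choose τ hτ using fun s : T => hE (r, s)
  have hτi : Function.Injective τ := by
    intro a b hab
    have := (hτ a).symm.trans ((congrArg E hab).trans (hτ b))
    exact (Prod.ext_iff.1 this).2
  have hP : (τ ⁻¹' (⋃ n, special (c n))).Countable := hA.preimage_of_injOn hτi.injOn
  obtain ⟨s, hs⟩ : ∃ s, s ∉ τ ⁻¹' (⋃ n, special (c n)) := by
    by_contra hcon
    push Not at hcon
    rw [eq_univ_of_forall hcon] at hP
    exact not_countable_univ hP
  refine ⟨τ s, ?_⟩
  rintro _ ⟨n, rfl⟩
  rw [ee_gen, hτ]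
  · exact gen_eq c z n
  · intro h
    exact hs (mem_iUnion.2 ⟨n, h⟩)

theorem ee_special {T : Type} (E : T → RR T × T) (P : PS) (c : ℕ → T) (g : T → P.1) (n : ℕ) :
    (ee E (c n) (Sum.inl (P, c, fun n => (g (c n)).1))).1 = (g (c n)).1 := by
  have h : ∃ m, c m = c n ∧ (g (c m)).1 ∈ P.1 := ⟨n, rfl, (g (c n)).2⟩
  simp only [ee]
  rw [dif_pos h]
  have := h.choose_spec.1
  simp only
  rw [this]

theorem exists_seq {T : Type} [Infinite T] (E : T → RR T × T) (hE : Function.Surjective E) :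
    ∃ z : ℕ → T, Function.Injective z ∧ ∀ j : T × T, ∀ᶠ n in Filter.atTop,
      ee E (z n) (Sum.inr j) = incl (Sum.inr j) (x0 T (Sum.inr j)) := by
  let a : T := Classical.arbitrary T
  let r : RR T := (fun _ => Sum.inr (a, a), fun _ => 0)
  have hr : ∀ j : T × T, (gen r (Sum.inr j)).1 = 0 := by
    intro j
    unfold gen
    split_ifs with h
    · rfl
    · exact x0_inr j
  choose τ hτ using fun s : T => hE (r, s)
  have hτi : Function.Injective τ := by
    intro a b hab
    have := (hτ a).symm.trans ((congrArg E hab).trans (hτ b))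
    exact (Prod.ext_iff.1 this).2
  refine ⟨fun n => τ (Infinite.natEmbedding T n), hτi.comp (Infinite.natEmbedding T).injective, ?_⟩
  intro j
  have hinj : Function.Injective (fun n => τ (Infinite.natEmbedding T n)) :=
    hτi.comp (Infinite.natEmbedding T).injective
  have hfin : ((fun n => τ (Infinite.natEmbedding T n)) ⁻¹' special (Sum.inr j)).Finite :=
    ((finite_singleton _).insert _).preimage hinj.injOn
  have := hfin.compl_mem_cofinite
  rw [Nat.cofinite_eq_atTop] at this
  filter_upwards [this] with n hn
  have hn' : τ (Infinite.natEmbedding T n) ∉ special (Sum.inr j) := hn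
  rw [ee_gen _ _ _ hn', hτ]
  apply Subtype.ext
  rw [hr]
  exact (x0_inr j).symm

theorem ee_sep {T : Type} (E : T → RR T × T) (s t : T) (h : s ≠ t) :
    (ee E s (Sum.inr (s, t))).1 = 0 ∧ (ee E t (Sum.inr (s, t))).1 = 1 := by
  simp [ee, h.symm]

theorem totallySep {T : Type} [TopologicalSpace T] (E : T → RR T × T) (h : Continuous (ee E)) :
    TotallySeparatedSpace T := by
  refine totallySeparatedSpace_iff_exists_isClopen.2 ?_
  intro s t hst
  let φ : T → HH := fun u => (ee E u (Sum.inr (s, t))).1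
  have hφ : Continuous φ := continuous_subtype_val.comp ((continuous_apply (Sum.inr (s, t) : Idx T)).comp h)
  have h01 : ∀ u, φ u = 0 ∨ φ u = 1 := fun u => (ee E u (Sum.inr (s, t))).2
  obtain ⟨h0, h1⟩ := ee_sep E s t hst
  refine ⟨φ ⁻¹' {0}, ⟨isClosed_singleton.preimage hφ, ?_⟩, h0, ?_⟩
  · have : φ ⁻¹' {0} = φ ⁻¹' {1}ᶜ := by
      ext u
      have : (0 : HH) ≠ 1 := zero_ne_one
      rcases h01 u with h | h <;> simp [h]
    rw [this]
    exact isOpen_compl_singleton.preimage hφ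
  · intro h
    have h' : φ t = 0 := h
    have h1' : φ t = 1 := h1
    rw [h'] at h1'
    exact zero_ne_one h1'

open Cardinal in
theorem exists_E : ∃ E : Set ℝ → RR (Set ℝ) × Set ℝ, Function.Surjective E := by
  have hc : #(RR (Set ℝ) × Set ℝ) ≤ #(Set ℝ) := by
    have hT : #(Set ℝ) = 2 ^ 𝔠 := by simp [mk_real]
    have hω : (2 ^ 𝔠 : Cardinal.{0}) ^ ℵ₀ = 2 ^ 𝔠 := by
      rw [← Cardinal.power_mul]; simp
    have hle : ℵ₀ ≤ (2 ^ 𝔠 : Cardinal.{0}) := (aleph0_le_continuum).trans (cantor _).le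
    have hH : #(ℕ → HH) ≤ 2 ^ 𝔠 := by
      simp only [HH, mk_pi, mk_real, prod_const]
      simp
      exact (cantor _).le
    have hPS : #PS ≤ 2 ^ 𝔠 := by
      refine (mk_subtype_le _).trans ?_
      simp [mk_real]
    have hNT : #(ℕ → Set ℝ) = 2 ^ 𝔠 := by
      rw [← power_def, hT, mk_nat, hω]
    have hIdx : #(Idx (Set ℝ)) ≤ 2 ^ 𝔠 := by
      rw [mk_sum, mk_prod, mk_prod, mk_prod]
      simp only [lift_id, hNT, hT]
      refine add_le_of_le hle (mul_le_of_le hle hPS (mul_le_of_le hle le_rfl hH)) ?_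
      exact mul_le_of_le hle le_rfl le_rfl
    have hNI : #(ℕ → Idx (Set ℝ)) ≤ 2 ^ 𝔠 := by
      rw [← power_def, mk_nat, ← hω]
      exact power_le_power_right hIdx
    rw [mk_prod, mk_prod]
    simp only [lift_id, hT]
    exact mul_le_of_le hle (mul_le_of_le hle hNI hH) le_rfl
  obtain ⟨f⟩ := hc
  exact ⟨Function.invFun f, Function.invFun_surjective f.injective⟩

/-- Embedding of a compact metric space. -/
theorem exists_embed (M : Type) [MetricSpace M] [CompactSpace M] [Nonempty M] :
    ∃ h : M → HH, IsClosedEmbedding h := by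
  let h : M → HH := fun x n => dist x (TopologicalSpace.denseSeq M n)
  have hc : Continuous h := continuous_pi fun n => continuous_id.dist continuous_const
  refine ⟨h, hc.isClosedEmbedding ?_⟩
  intro x y hxy
  have hn : ∀ n, dist x (TopologicalSpace.denseSeq M n) = dist y (TopologicalSpace.denseSeq M n) :=
    fun n => congrFun hxy n
  have hall : ∀ u, dist x u = dist y u := by
    intro u
    have := DenseRange.equalizer (TopologicalSpace.denseRange_denseSeq M)
      (show Continuous (fun u => dist x u) by fun_prop)
      (show Continuous (fun u => dist y u) by fun_prop) (funext hn)
    exact congrFun this u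
  have := hall y
  rw [dist_self] at this
  exact dist_eq_zero.1 this

theorem ext_countable {T M : Type} [TopologicalSpace T] (E : T → RR T × T) (h : Continuous (ee E))
    [MetricSpace M] [CompactSpace M] [ConnectedSpace M] [LocallyConnectedSpace M]
    (A : Set T) (hA : A.Countable) (g : T → M) : ∃ f : T → M, Continuous f ∧ ∀ t ∈ A, f t = g t := by
  rcases A.eq_empty_or_nonempty with rfl | hne
  · exact ⟨fun _ => Classical.arbitrary M, continuous_const, by simp⟩
  obtain ⟨c, rfl⟩ := hA.exists_eq_range hne
  obtain ⟨k, hk⟩ := exists_embed M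
  let φ : M ≃ₜ range k := hk.isEmbedding.toHomeomorph
  let P : PS := ⟨range k, φ.compactSpace, φ.surjective.connectedSpace φ.continuous,
    φ.symm.locallyConnectedSpace⟩
  let i : Idx T := Sum.inl (P, c, fun n => (φ (g (c n))).1)
  have hc : Continuous (fun t => (ee E t i : range k)) := (continuous_apply i).comp h
  refine ⟨fun t => φ.symm (ee E t i), φ.symm.continuous.comp hc, ?_⟩
  rintro _ ⟨n, rfl⟩
  have := ee_special E P c (fun t => φ (g t)) n
  have h2 : (ee E (c n) i : range k) = φ (g (c n)) := Subtype.ext this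
  change φ.symm (ee E (c n) i) = _
  rw [h2]
  simp

end CpBaire

/-- There is a totally disconnected (totally separated) Tychonoff space `T` such that,
for every nonempty separable metric space `M`, the space `C_p(T, M)` is Baire iff `M` is a
Peano continuum (a nonempty connected, locally connected, compact metric space). -/
theorem statement13 :
    ∃ (T : Type) (_ : TopologicalSpace T), T1Space T ∧ CompletelyRegularSpace T ∧
      TotallySeparatedSpace T ∧
      ∀ (M : Type) (_ : MetricSpace M), Nonempty M → TopologicalSpace.SeparableSpace M →
        (BaireSpace (Cp T M) ↔
          (CompactSpace M ∧ ConnectedSpace M ∧ LocallyConnectedSpace M)) := by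
  
  classical
  obtain ⟨E, hE⟩ := CpBaire.exists_E
  have hunc : Uncountable (Set ℝ) := by
    have : Function.Injective (fun x : ℝ => ({x} : Set ℝ)) := Set.singleton_injective
    exact this.uncountable
  let top : TopologicalSpace (Set ℝ) := TopologicalSpace.induced (CpBaire.ee E) inferInstance
  have hind : IsInducing (CpBaire.ee E) := ⟨rfl⟩
  have hcont : Continuous (CpBaire.ee E) := hind.continuous
  have hts : TotallySeparatedSpace (Set ℝ) := CpBaire.totallySep E hcont
  refine ⟨Set ℝ, top, inferInstance, hind.completelyRegularSpace, hts, ?_⟩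
  intro M _ hM hsep
  have hsc : SecondCountableTopology M := UniformSpace.secondCountable_of_separable M
  constructor
  · intro hB
    obtain ⟨z, hz, hzJ⟩ := CpBaire.exists_seq E hE
    obtain ⟨f, hf, hfd⟩ := CpBaire.exists_generic (M := M) z hz
    obtain ⟨F, hF, hFe⟩ := CpBaire.exists_ext (CpBaire.ee E) hind (CpBaire.ee_dense E hE) f hf
    refine CpBaire.peano_of_factor (X' := fun i => CpBaire.XX' (Set ℝ) i) (CpBaire.ee E)
      CpBaire.incl ?_ (range Sum.inr) ?_ z (CpBaire.x0 (Set ℝ)) ?_ F hF ?_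
    · intro i
      exact continuous_subtype_val.subtype_mk _
    · rintro (i | i) hi
      · intro x
        exact ⟨⟨x.1, x.2⟩, rfl⟩
      · exact absurd ⟨i, rfl⟩ hi
    · rintro _ ⟨j, rfl⟩
      exact hzJ j
    · simpa only [hFe] using hfd
  · rintro ⟨h1, h2, h3⟩
    exact CpBaire.baire_of_ext (CpBaire.ext_countable E hcont)
end

section
/- There exists a totally disconnected Tychonoff space T such that C_p(T, [0,1]) is a Baire space but C_p(T, {0,1}) is not a Baire space. -/
open Set Topology

namespace CpEx

open Filter

/-- An open set containing `p` contains all points agreeing with `p` on a finite set. -/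
lemma open_finite_support {I : Type*} {Y : Type*} [TopologicalSpace Y] {U : Set (I → Y)}
    (hU : IsOpen U) {p : I → Y} (hp : p ∈ U) :
    ∃ S : Finset I, ∀ q : I → Y, (∀ i ∈ S, q i = p i) → q ∈ U := by
  obtain ⟨S, u, hu, hsub⟩ := isOpen_pi_iff.1 hU p hp
  refine ⟨S, fun q hq => hsub ?_⟩
  intro i hi
  rw [hq i hi]
  exact (hu i hi).2

lemma countable_finsets {I : Type*} {C : Set I} (hC : C.Countable) :
    {F : Finset I | (F : Set I) ⊆ C}.Countable := by
  refine ((Set.countable_ofPred_finite_subset hC).preimage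
    (f := fun F : Finset I => (F : Set I)) Finset.coe_injective).mono ?_
  intro F hF
  exact ⟨F.finite_toSet, hF⟩

/-- Closures of open sets in products of first countable spaces: if `p ∈ closure U`, then
membership of `p` is witnessed by countably many coordinates. -/
lemma closure_countable_support {I : Type*} {Y : Type*} [TopologicalSpace Y]
    [FirstCountableTopology Y] {U : Set (I → Y)} (hU : IsOpen U) {p : I → Y}
    (hp : p ∈ closure U) :
    ∃ C : Set I, C.Countable ∧ ∀ q : I → Y, (∀ i ∈ C, q i = p i) → q ∈ closure U := by
  classical
  have hb : ∀ y : Y, ∃ B : ℕ → Set Y, (𝓝 y).HasAntitoneBasis B :=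
    fun y => (𝓝 y).exists_antitone_basis
  choose B hB using hb
  have key : ∀ (F : Finset I) (n : ℕ), ∃ (u : I → Y) (S : Finset I),
      (∀ i ∈ F, u i ∈ B (p i) n) ∧ ∀ r : I → Y, (∀ i ∈ S, r i = u i) → r ∈ U := by
    intro F n
    have hn : (F : Set I).pi (fun i => B (p i) n) ∈ 𝓝 p :=
      set_pi_mem_nhds F.finite_toSet (fun i _ => (hB (p i)).mem n)
    obtain ⟨u, hu1, hu2⟩ := mem_closure_iff_nhds.1 hp _ hn
    obtain ⟨S, hS⟩ := open_finite_support hU hu2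
    exact ⟨u, S, hu1, hS⟩
  choose u S hu hS using key
  let D : ℕ → Set I := fun m => Nat.rec (∅ : Set I)
    (fun _ C => C ∪ ⋃ F ∈ {F : Finset I | (F : Set I) ⊆ C}, ⋃ n : ℕ, (S F n : Set I)) m
  have hDs : ∀ m, D (m + 1) =
      D m ∪ ⋃ F ∈ {F : Finset I | (F : Set I) ⊆ D m}, ⋃ n : ℕ, (S F n : Set I) := fun m => rfl
  have hDc : ∀ m, (D m).Countable := by
    intro m
    induction m with
    | zero => exact countable_empty
    | succ m ih =>
      rw [hDs]
      refine ih.union (Set.Countable.biUnion (countable_finsets ih) ?_)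
      intro F _
      exact countable_iUnion fun n => (S F n).countable_toSet
  have hDm : Monotone D := monotone_nat_of_le_succ fun m => by
    rw [hDs]; exact subset_union_left
  refine ⟨⋃ m, D m, countable_iUnion hDc, fun q hq => ?_⟩
  rw [mem_closure_iff]
  intro W hW hqW
  obtain ⟨F, w, hw, hsub⟩ := isOpen_pi_iff.1 hW q hqW
  let G : Finset I := F.filter (fun i => i ∈ ⋃ m, D m)
  have hG : ∃ m, (G : Set I) ⊆ D m := by
    have : (G : Set I) ⊆ ⋃ m, D m := by
      intro i hi
      exact (Finset.mem_filter.1 hi).2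
    have h1 : ∀ i ∈ G, ∃ m, i ∈ D m := fun i hi => mem_iUnion.1 (this hi)
    choose! N hN using h1
    exact ⟨G.sup N, fun i hi => hDm (Finset.le_sup hi) (hN i hi)⟩
  obtain ⟨m, hm⟩ := hG
  have hn : ∃ n, ∀ i ∈ G, B (p i) n ⊆ w i := by
    have h1 : ∀ i ∈ G, ∃ n, B (p i) n ⊆ w i := by
      intro i hi
      have hi' := Finset.mem_filter.1 hi
      have : w i ∈ 𝓝 (p i) := by
        rw [← hq i hi'.2]
        exact (hw i hi'.1).1.mem_nhds (hw i hi'.1).2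
      obtain ⟨n, -, hn⟩ := (hB (p i)).1.mem_iff.1 this
      exact ⟨n, hn⟩
    choose! N hN using h1
    refine ⟨G.sup N, fun i hi => ?_⟩
    exact ((hB (p i)).antitone (Finset.le_sup hi)).trans (hN i hi)
  obtain ⟨n, hn⟩ := hn
  refine ⟨fun i => if i ∈ ⋃ m, D m then u G n i else q i, hsub ?_, ?_⟩
  · intro i hi
    by_cases hiD : i ∈ ⋃ m, D m
    · have hiG : i ∈ G := Finset.mem_filter.2 ⟨hi, hiD⟩
      simp only [if_pos hiD]
      exact hn i hiG (hu G n i hiG)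
    · simp only [if_neg hiD]
      exact (hw i hi).2
  · apply hS G n
    intro i hi
    have : i ∈ ⋃ m, D m := by
      refine mem_iUnion.2 ⟨m + 1, ?_⟩
      rw [hDs]
      refine Or.inr (mem_biUnion (x := G) hm (mem_iUnion.2 ⟨n, hi⟩))
    simp only [if_pos this]

/-- A subset of a cube which interpolates all countable partial functions is Baire. -/
lemma baire_of_interp {T : Type} [TopologicalSpace T]
    (h : ∀ (C : Set T) (p : T → unitInterval), C.Countable →
      ∃ f : T → unitInterval, Continuous f ∧ ∀ t ∈ C, f t = p t) :
    BaireSpace (Cp T unitInterval) := by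
  have hden : ∀ W : Set (T → unitInterval), IsOpen W → W.Nonempty →
      ∃ f : Cp T unitInterval, f.1 ∈ W := by
    rintro W hW ⟨p, hp⟩
    obtain ⟨S, hS⟩ := open_finite_support hW hp
    obtain ⟨f, hf, hfp⟩ := h S p S.countable_toSet
    exact ⟨⟨f, hf⟩, hS f hfp⟩
  refine ⟨fun O hO hOd => ?_⟩
  choose O' hO' hOO' using fun n => isOpen_induced_iff.1 (hO n)
  have hd : ∀ n, Dense (O' n) := by
    intro n
    rw [dense_iff_inter_open]
    intro W hW hne
    obtain ⟨f, hf⟩ := hden W hW hne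
    obtain ⟨g, hg1, hg2⟩ := dense_iff_inter_open.1 (hOd n) (Subtype.val ⁻¹' W)
      (hW.preimage continuous_subtype_val) ⟨f, hf⟩
    refine ⟨g.1, hg1, ?_⟩
    rw [← hOO' n] at hg2
    exact hg2
  have hD : Dense (⋂ n, O' n) := dense_iInter_of_isOpen_nat hO' hd
  rw [dense_iff_inter_open]
  rintro W hW ⟨w, hw⟩
  obtain ⟨W', hW', rfl⟩ := isOpen_induced_iff.1 hW
  obtain ⟨p, hp1, hp2⟩ := dense_iff_inter_open.1 hD W' hW' ⟨w.1, hw⟩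
  obtain ⟨S, hS⟩ := open_finite_support hW' hp1
  have hp3 := fun n => open_finite_support (hO' n) (mem_iInter.1 hp2 n)
  choose R hR using hp3
  obtain ⟨f, hf, hfp⟩ := h ((S : Set T) ∪ ⋃ n, (R n : Set T)) p
    (S.countable_toSet.union (countable_iUnion fun n => (R n).countable_toSet))
  refine ⟨⟨f, hf⟩, hS f fun i hi => hfp i (Or.inl hi), mem_iInter.2 fun n => ?_⟩
  rw [← hOO' n]
  exact hR n f fun i hi => hfp i (Or.inr (mem_iUnion.2 ⟨n, hi⟩))

/-- The key lemma: for a map `Φ` to `(Bool × [0,1])^K` hitting every countable box, clopen sets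
do not separate consecutive terms of sequences whose `Bool`-parts converge. -/
lemma clopen_eventually {T K : Type} (Φ : T → K → Bool × unitInterval)
    (hΦ : ∀ (C : Set K) (p : K → Bool × unitInterval), C.Countable →
      ∃ t, ∀ k ∈ C, Φ t k = p k)
    (f : T → Bool) (hf : @Continuous _ _ (TopologicalSpace.induced Φ inferInstance) _ f)
    (x : ℕ → T) (β : K → Bool)
    (hx : Tendsto (fun n k => (Φ (x n) k).1) atTop (𝓝 β)) :
    ∃ n, ∀ m ≥ n, f (x m) = f (x (m + 1)) := by
  let _ : TopologicalSpace T := TopologicalSpace.induced Φ inferInstance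
  have hopen : ∀ c : Bool, ∃ U : Set (K → Bool × unitInterval), IsOpen U ∧ Φ ⁻¹' U = f ⁻¹' {c} :=
    fun c => isOpen_induced_iff.1 ((isOpen_discrete {c}).preimage hf)
  obtain ⟨U, hU, hUf⟩ := hopen true
  obtain ⟨V, hV, hVf⟩ := hopen false
  have hU' : ∀ t, Φ t ∈ U ↔ f t = true := fun t => by
    rw [← mem_preimage, hUf]; rfl
  have hV' : ∀ t, Φ t ∈ V ↔ f t = false := fun t => by
    rw [← mem_preimage, hVf]; rfl
  have hden : ∀ W : Set (K → Bool × unitInterval), IsOpen W → W.Nonempty → ∃ t, Φ t ∈ W := by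
    rintro W hW ⟨p, hp⟩
    obtain ⟨S, hS⟩ := open_finite_support hW hp
    obtain ⟨t, ht⟩ := hΦ S p S.countable_toSet
    exact ⟨t, hS _ ht⟩
  have hdisj : Disjoint U V := by
    rw [Set.disjoint_iff_inter_eq_empty]
    by_contra hne
    obtain ⟨t, ht1, ht2⟩ := hden _ (hU.inter hV) (nonempty_iff_ne_empty.2 hne)
    rw [hU'] at ht1
    rw [hV'] at ht2
    simp [ht1] at ht2
  have hd1 : Disjoint U (closure V) := hdisj.closure_right hU
  have hd2 : Disjoint (closure U) V := hdisj.closure_left hV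
  have hcov : closure U ∪ closure V = univ := by
    rw [← closure_union]
    refine Dense.closure_eq (dense_iff_inter_open.2 fun W hW hne => ?_)
    obtain ⟨t, ht⟩ := hden W hW hne
    refine ⟨Φ t, ht, ?_⟩
    cases h : f t
    · exact Or.inr ((hV' t).2 h)
    · exact Or.inl ((hU' t).2 h)
  have hcd : Disjoint (closure U) (closure V) := by
    rw [Set.disjoint_left]
    intro p hp1 hp2
    obtain ⟨C₁, hC₁, h₁⟩ := closure_countable_support hU hp1
    obtain ⟨C₂, hC₂, h₂⟩ := closure_countable_support hV hp2
    obtain ⟨t, ht⟩ := hΦ _ p (hC₁.union hC₂)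
    have a1 := h₁ (Φ t) fun i hi => ht i (Or.inl hi)
    have a2 := h₂ (Φ t) fun i hi => ht i (Or.inr hi)
    cases h : f t
    · exact Set.disjoint_left.1 hd2 a1 ((hV' t).2 h)
    · exact Set.disjoint_left.1 hd1 ((hU' t).2 h) a2
  have hcompl : (closure U)ᶜ = closure V :=
    (IsCompl.of_eq hcd.eq_bot hcov).compl_eq
  have hclopen : IsClopen (closure U) := by
    refine ⟨isClosed_closure, ?_⟩
    rw [← isClosed_compl_iff, hcompl]
    exact isClosed_closure
  have hmem : ∀ t, Φ t ∈ closure U ↔ f t = true := by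
    intro t
    constructor
    · intro h
      cases h' : f t
      · exact (Set.disjoint_left.1 hd2 h ((hV' t).2 h')).elim
      · rfl
    · exact fun h => subset_closure ((hU' t).2 h)
  have hslice : ∀ (γ : K → Bool) (y : K → unitInterval),
      (fun k => (γ k, y k)) ∈ closure U ↔ (fun k => (γ k, (0 : unitInterval))) ∈ closure U := by
    intro γ y
    have hc : Continuous (fun (z : K → unitInterval) (k : K) => (γ k, z k)) := by fun_prop
    rcases isClopen_iff.1 (hclopen.preimage hc) with h | h
    · have h1 := Set.eq_empty_iff_forall_notMem.1 h
      exact iff_of_false (h1 y) (h1 fun _ => 0)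
    · have h1 := Set.eq_univ_iff_forall.1 h
      exact iff_of_true (h1 y) (h1 fun _ => 0)
  let g : (K → Bool) → K → Bool × unitInterval := fun γ k => (γ k, 0)
  have hg : Continuous g := by fun_prop
  have hfg : ∀ n, f (x n) = true ↔ (fun k => (Φ (x n) k).1) ∈ g ⁻¹' closure U := by
    intro n
    rw [← hmem, mem_preimage]
    exact hslice (fun k => (Φ (x n) k).1) (fun k => (Φ (x n) k).2)
  have hA := hclopen.preimage hg
  have hev : ∃ c : Bool, ∀ᶠ n in atTop, f (x n) = c := by
    by_cases hβ : β ∈ g ⁻¹' closure U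
    · refine ⟨true, ?_⟩
      filter_upwards [hx (hA.isOpen.mem_nhds hβ)] with n hn
      exact (hfg n).2 hn
    · refine ⟨false, ?_⟩
      filter_upwards [hx (hA.compl.isOpen.mem_nhds hβ)] with n hn
      rw [← Bool.not_eq_true, hfg]
      exact hn
  obtain ⟨c, hc⟩ := hev
  obtain ⟨n, hn⟩ := eventually_atTop.1 hc
  exact ⟨n, fun m hm => by rw [hn m hm, hn (m + 1) (by omega)]⟩

open Classical in
/-- Lookup in a countable partial function coded by a pair of sequences. -/
noncomputable def lookup {X Y : Type} (a : ℕ → X) (g : ℕ → Y) (y₀ : Y) (x : X) : Y :=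
  if h : ∃ n, a n = x then g (Nat.find h) else y₀

lemma lookup_of_notMem {X Y : Type} {a : ℕ → X} {g : ℕ → Y} {y₀ : Y} {x : X}
    (h : x ∉ range a) : lookup a g y₀ x = y₀ := by
  unfold lookup
  rw [dif_neg]
  exact h

lemma lookup_of_mem {X Y : Type} {a : ℕ → X} {q : X → Y} {y₀ : Y} {x : X}
    (h : x ∈ range a) : lookup a (fun n => q (a n)) y₀ x = q x := by
  classical
  unfold lookup
  have h' : ∃ n, a n = x := h
  rw [dif_pos h']
  exact congrArg q (Nat.find_spec h')

lemma exists_surj (D : Type) [Nonempty D] (hD : Cardinal.mk D ≤ Cardinal.continuum) :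
    ∃ e : ℝ → D, ∀ d, ¬ (e ⁻¹' {d}).Countable := by
  have h : Cardinal.mk (D × ℝ) ≤ Cardinal.mk ℝ := by
    rw [Cardinal.mk_prod, Cardinal.lift_id, Cardinal.lift_id, Cardinal.mk_real]
    exact (mul_le_mul' hD le_rfl).trans (Cardinal.continuum_mul_self).le
  obtain ⟨i⟩ := h
  obtain ⟨r, hr⟩ := i.injective.hasLeftInverse
  refine ⟨fun x => (r x).1, fun d hc => ?_⟩
  have h2 : ((fun t : ℝ => i (d, t)) ⁻¹' ((fun x => (r x).1) ⁻¹' {d})).Countable :=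
    hc.preimage_of_injOn (fun a _ b _ hab => by simpa using i.injective hab)
  have h3 : ((fun t : ℝ => i (d, t)) ⁻¹' ((fun x => (r x).1) ⁻¹' {d})) = univ := by
    ext t
    simp [hr (d, t)]
  rw [h3] at h2
  exact Cardinal.not_countable_real h2

/-- Summary of the combinatorial construction. -/
lemma exists_family : ∃ (Φ : ℝ → ℝ → Bool × unitInterval),
    (∀ (C : Set ℝ) (p : ℝ → Bool × unitInterval), C.Countable → ∃ t, ∀ k ∈ C, Φ t k = p k) ∧
    (∀ (A : Set ℝ) (g : ℝ → unitInterval), A.Countable → ∃ k, ∀ t ∈ A, (Φ t k).2 = g t) ∧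
    (∀ (A : Set ℝ) (s : ℝ), A.Countable → ∃ k, (Φ s k).1 = true ∧
      ∀ t ∈ A, t ≠ s → (Φ t k).1 = false) ∧
    ∃ x : ℕ → ℝ, Function.Injective x ∧
      Tendsto (fun n k => (Φ (x n) k).1) atTop (𝓝 fun _ => false) := by
  classical
  have hI : Cardinal.mk unitInterval ≤ Cardinal.continuum := by
    rw [← Cardinal.mk_real]; exact Cardinal.mk_subtype_le _
  have hR : Cardinal.mk (ℕ → ℝ) ≤ Cardinal.continuum := by simp [Cardinal.mk_real]
  have hNI : Cardinal.mk (ℕ → unitInterval) ≤ Cardinal.continuum := by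
    rw [Cardinal.mk_arrow]
    simp only [Cardinal.lift_id, Cardinal.mk_nat]
    exact (Cardinal.power_le_power_right hI).trans Cardinal.continuum_power_aleph0.le
  have hBI : Cardinal.mk (Bool × unitInterval) ≤ Cardinal.continuum := by
    rw [Cardinal.mk_prod, Cardinal.lift_id, Cardinal.lift_id]
    refine (mul_le_mul' ?_ hI).trans (Cardinal.continuum_mul_self).le
    simp only [Cardinal.mk_bool]
    exact (Cardinal.nat_lt_continuum 2).le
  have hNBI : Cardinal.mk (ℕ → Bool × unitInterval) ≤ Cardinal.continuum := by
    rw [Cardinal.mk_arrow]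
    simp only [Cardinal.lift_id, Cardinal.mk_nat]
    exact (Cardinal.power_le_power_right hBI).trans Cardinal.continuum_power_aleph0.le
  have hmul : ∀ {X Y : Type}, Cardinal.mk X ≤ Cardinal.continuum →
      Cardinal.mk Y ≤ Cardinal.continuum → Cardinal.mk (X × Y) ≤ Cardinal.continuum := by
    intro X Y hX hY
    rw [Cardinal.mk_prod, Cardinal.lift_id, Cardinal.lift_id]
    exact (mul_le_mul' hX hY).trans (Cardinal.continuum_mul_self).le
  obtain ⟨e, he⟩ := exists_surj ((ℕ → ℝ) × (ℕ → Bool × unitInterval)) (hmul hR hNBI)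
  obtain ⟨d, hd⟩ := exists_surj (ℝ × (ℕ → ℝ) × (ℕ → unitInterval))
    (hmul Cardinal.mk_real.le (hmul hR hNI))
  let P : ℝ → ℝ → Bool × unitInterval := fun s k =>
    lookup (e s).1 (e s).2 (decide ((d k).1 = s), 0) k
  let Φ : ℝ → ℝ → Bool × unitInterval := fun s k =>
    ((P s k).1, lookup (d k).2.1 (d k).2.2 (P s k).2 s)
  -- countable sets are contained in ranges
  have henum : ∀ C : Set ℝ, C.Countable → ∃ a : ℕ → ℝ, C ⊆ range a := by
    intro C hC
    rcases C.eq_empty_or_nonempty with rfl | hne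
    · exact ⟨fun _ => 0, empty_subset _⟩
    · obtain ⟨a, ha⟩ := hC.exists_eq_range hne
      exact ⟨a, ha.le⟩
  have havoid : ∀ {S C : Set ℝ}, ¬ S.Countable → C.Countable → ∃ s ∈ S, s ∉ C := by
    intro S C hS hC
    by_contra! h
    exact hS (hC.mono h)
  refine ⟨Φ, ?_, ?_, ?_, ?_⟩
  · intro C p hC
    obtain ⟨a, ha⟩ := henum C hC
    obtain ⟨s, hs, hs'⟩ := havoid (he (a, fun n => p (a n)))
      (hC.biUnion fun k _ => countable_range (d k).2.1)
    refine ⟨s, fun k hk => ?_⟩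
    have hs : e s = (a, fun n => p (a n)) := hs
    have h1 : P s k = p k := by
      simp only [P, hs]
      exact lookup_of_mem (ha hk)
    have h2 : s ∉ range (d k).2.1 := fun h => hs' (mem_biUnion hk h)
    simp only [Φ, lookup_of_notMem h2, h1]
  · intro A g hA
    obtain ⟨a, ha⟩ := henum A hA
    obtain ⟨k, hk, -⟩ := havoid (hd (0, a, fun n => g (a n))) countable_empty
    have hk : d k = (0, a, fun n => g (a n)) := hk
    refine ⟨k, fun t ht => ?_⟩
    simp only [Φ, hk]
    exact lookup_of_mem (ha ht)
  · intro A s hA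
    obtain ⟨k, hk, hk'⟩ := havoid (hd (s, fun _ => 0, fun _ => 0))
      ((hA.insert s).biUnion fun t _ => countable_range (e t).1)
    have hk : d k = (s, fun _ => 0, fun _ => 0) := hk
    have h1 : ∀ t ∈ insert s A, k ∉ range (e t).1 := fun t ht h => hk' (mem_biUnion ht h)
    refine ⟨k, ?_, fun t ht hts => ?_⟩
    · simp [Φ, P, lookup_of_notMem (h1 s (mem_insert _ _)), hk]
    · simp only [Φ, P, lookup_of_notMem (h1 t (mem_insert_of_mem _ ht)), hk]
      simpa using fun h => hts h.symm
  · have hinf : (e ⁻¹' {((fun _ => 0), (fun _ => (false, 0)))}).Infinite :=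
      fun h => he _ h.countable
    let x := hinf.natEmbedding
    refine ⟨fun n => x n, fun m n h => x.injective (Subtype.ext h), ?_⟩
    rw [tendsto_pi_nhds]
    intro k
    have hx : ∀ n, e (x n) = ((fun _ => 0), (fun _ => (false, 0))) := fun n => (x n).2
    have hval : ∀ n, (d k).1 ≠ x n → (Φ (x n) k).1 = false := by
      intro n hn
      simp only [Φ, P, hx n, lookup]
      split_ifs <;> simp [hn]
    refine tendsto_const_nhds.congr' ?_
    have : ∀ᶠ n in atTop, (d k).1 ≠ x n := by
      by_cases hex : ∃ n, (d k).1 = x n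
      · obtain ⟨n, hn⟩ := hex
        filter_upwards [eventually_gt_atTop n] with m hm heq
        have : x n = x m := Subtype.ext (hn.symm.trans heq)
        exact hm.ne (x.injective this)
      · exact Eventually.of_forall fun n h => hex ⟨n, h⟩
    filter_upwards [this] with n hn
    exact (hval n hn).symm


lemma final {T K : Type} (Φ : T → K → Bool × unitInterval)
    (h1 : ∀ (C : Set K) (p : K → Bool × unitInterval), C.Countable →
      ∃ t, ∀ k ∈ C, Φ t k = p k)
    (h2 : ∀ (A : Set T) (g : T → unitInterval), A.Countable → ∃ k, ∀ t ∈ A, (Φ t k).2 = g t)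
    (h3 : ∀ (A : Set T) (s : T), A.Countable → ∃ k, (Φ s k).1 = true ∧
      ∀ t ∈ A, t ≠ s → (Φ t k).1 = false)
    (x : ℕ → T) (hxi : Function.Injective x)
    (hx : Tendsto (fun n k => (Φ (x n) k).1) atTop (𝓝 fun _ => false)) :
    ∃ (_ : TopologicalSpace T), T1Space T ∧ CompletelyRegularSpace T ∧
      TotallySeparatedSpace T ∧
      BaireSpace (Cp T unitInterval) ∧ ¬ BaireSpace (Cp T Bool) := by
  let τ : TopologicalSpace T := TopologicalSpace.induced Φ inferInstance
  have hind : IsInducing Φ := ⟨rfl⟩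
  have hΦc : Continuous Φ := hind.continuous
  have hb : ∀ k, Continuous fun t => (Φ t k).1 := fun k => by fun_prop
  have hφ : ∀ k, Continuous fun t => (Φ t k).2 := fun k => by fun_prop
  have hinj : Function.Injective Φ := by
    intro s t hst
    by_contra hne
    obtain ⟨k, hk1, hk2⟩ := h3 {t} s (countable_singleton t)
    have := hk2 t rfl (Ne.symm hne)
    rw [← hst, hk1] at this
    cases this
  have hemb : IsEmbedding Φ := ⟨hind, hinj⟩
  refine ⟨τ, hemb.t1Space, hind.completelyRegularSpace, ?_, ?_, ?_⟩
  · rw [totallySeparatedSpace_iff_exists_isClopen]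
    intro s t hne
    obtain ⟨k, hk1, hk2⟩ := h3 {t} s (countable_singleton t)
    refine ⟨(fun t => (Φ t k).1) ⁻¹' {true}, (isClopen_discrete _).preimage (hb k), hk1, ?_⟩
    simp [hk2 t rfl hne.symm]
  · refine baire_of_interp fun C p hC => ?_
    obtain ⟨k, hk⟩ := h2 C p hC
    exact ⟨_, hφ k, hk⟩
  · intro hB
    let O : ℕ → Set (Cp T Bool) := fun n => ⋃ m ≥ n, {f | f.1 (x m) ≠ f.1 (x (m + 1))}
    have hO : ∀ n, IsOpen (O n) := by
      intro n
      refine isOpen_biUnion fun m _ => ?_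
      have hc : Continuous fun f : Cp T Bool => (f.1 (x m), f.1 (x (m + 1))) :=
        ((continuous_apply (x m)).comp continuous_subtype_val).prodMk
          ((continuous_apply (x (m + 1))).comp continuous_subtype_val)
      exact (isOpen_discrete {q : Bool × Bool | q.1 ≠ q.2}).preimage hc
    have hOd : ∀ n, Dense (O n) := by
      intro n
      rw [dense_iff_inter_open]
      rintro W hW ⟨f, hf⟩
      obtain ⟨W', hW', rfl⟩ := isOpen_induced_iff.1 hW
      obtain ⟨S, hS⟩ := open_finite_support hW' hf
      have hfin : {m | x m ∈ S}.Finite := S.finite_toSet.preimage hxi.injOn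
      obtain ⟨m, hm1, hm2⟩ : ∃ m ≥ n, x m ∉ S := by
        obtain ⟨m, hm, hm'⟩ := (Set.Ici_infinite n).exists_notMem_finite hfin
        exact ⟨m, hm, hm'⟩
      by_cases hfm : f.1 (x m) = f.1 (x (m + 1))
      · obtain ⟨k, hk1, hk2⟩ := h3 ((S : Set T) ∪ {x (m + 1)}) (x m)
          (S.countable_toSet.union (countable_singleton _))
        have hne : x (m + 1) ≠ x m := fun h => by simpa using hxi h
        have hxor : Continuous fun q : Bool × Bool => xor q.1 q.2 := continuous_of_discreteTopology
        refine ⟨⟨fun t => xor (f.1 t) (Φ t k).1, hxor.comp (f.2.prodMk (hb k))⟩, ?_, ?_⟩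
        · refine hS _ fun t ht => ?_
          have : (Φ t k).1 = false := hk2 t (Or.inl ht) (fun h => hm2 (h ▸ ht))
          simp [this]
        · refine mem_biUnion hm1 ?_
          have : (Φ (x (m + 1)) k).1 = false := hk2 _ (Or.inr rfl) hne
          simp [this, hk1, hfm]
      · exact ⟨f, hf, mem_biUnion hm1 hfm⟩
    have hD := dense_iInter_of_isOpen_nat hO hOd
    have : Nonempty (Cp T Bool) := ⟨⟨fun _ => false, continuous_const⟩⟩
    obtain ⟨f, hf⟩ := hD.nonempty
    obtain ⟨n, hn⟩ := clopen_eventually Φ h1 f.1 f.2 x _ hx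
    obtain ⟨m, hm, hne⟩ := mem_iUnion₂.1 (mem_iInter.1 hf n)
    exact hne (hn m hm)

end CpEx

/-- There is a totally disconnected (totally separated) Tychonoff space `T` such that
`C_p(T, [0,1])` is a Baire space but `C_p(T, {0,1})` is not. Here `[0,1]` is the unit
interval and `{0,1}` the two-point discrete space, realized as `Bool`. -/
theorem statement14 :
    ∃ (T : Type) (_ : TopologicalSpace T), T1Space T ∧ CompletelyRegularSpace T ∧
      TotallySeparatedSpace T ∧
      BaireSpace (Cp T unitInterval) ∧ ¬ BaireSpace (Cp T Bool) := by
  obtain ⟨Φ, h1, h2, h3, x, hxi, hx⟩ := CpEx.exists_family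
  exact ⟨ℝ, CpEx.final Φ h1 h2 h3 x hxi hx⟩
end

section
/- A Tychonoff space X is totally disconnected (i.e., every quasi-component is a singleton) if, and only if, C_p(X, 𝔻) is dense in the product space 𝔻^X. -/
open Set Topology

/-- A Tychonoff space `X` is totally disconnected (every quasi-component is a singleton,
i.e. any two distinct points are separated by a clopen set) iff `C_p(X, 𝔻)` is dense in
`𝔻^X`. Here `𝔻 = {0,1}` is the two-point discrete space, realized as `Bool`. -/
theorem statement15 (X : Type*) [TopologicalSpace X] [T1Space X] [CompletelyRegularSpace X] :
    TotallySeparatedSpace X ↔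
      Dense (Set.range (Subtype.val : Cp X Bool → X → Bool)) := by
  rw [totallySeparatedSpace_iff_exists_isClopen]
  constructor
  · intro h f
    have h' : ∀ x y : X, ∃ U : Set X, IsClopen U ∧ (x ≠ y → x ∈ U ∧ y ∉ U) := by
      intro x y
      by_cases hxy : x = y
      · exact ⟨univ, isClopen_univ, fun h => absurd hxy h⟩
      · obtain ⟨U, hU, hx, hy⟩ := h hxy
        exact ⟨U, hU, fun _ => ⟨hx, hy⟩⟩
    choose U hU hUs using h'
    rw [mem_closure_iff]
    intro O hO hf
    obtain ⟨I, u, hu, hIu⟩ := isOpen_pi_iff.1 hO f hf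
    classical
    let V : Set X := ⋃ x ∈ I.filter (fun x => f x = true),
      ⋂ y ∈ I.filter (fun y => f y = false), U x y
    have hV : IsClopen V :=
      isClopen_biUnion_finset fun x _ => isClopen_biInter_finset fun y _ => hU x y
    have hg : Continuous (fun z => decide (z ∈ V)) := by
      rw [continuous_bool_rng true]
      convert hV using 1
      ext z
      simp
    refine ⟨fun z => decide (z ∈ V), hIu ?_, ⟨⟨_, hg⟩, rfl⟩⟩
    intro z hz
    have hz' : z ∈ I := hz
    have key : decide (z ∈ V) = f z := by
      cases hfz : f z with
      | true =>
        rw [decide_eq_true_iff]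
        simp only [V, mem_iUnion, mem_iInter, Finset.mem_filter]
        refine ⟨z, ⟨hz', hfz⟩, fun y hy => (hUs z y ?_).1⟩
        rintro rfl
        simp [hfz] at hy
      | false =>
        rw [decide_eq_false_iff_not]
        simp only [V, mem_iUnion, mem_iInter, Finset.mem_filter]
        rintro ⟨x, ⟨hx, hfx⟩, hall⟩
        refine (hUs x z ?_).2 (hall z ⟨hz', hfz⟩)
        rintro rfl
        simp [hfx] at hfz
    change decide (z ∈ V) ∈ u z
    rw [key]
    exact (hu z hz').2
  · intro h x y hxy
    classical
    have hO : IsOpen {g : X → Bool | g x = true ∧ g y = false} := by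
      have hc : ∀ z : X, Continuous (fun g : X → Bool => g z) := fun z => continuous_apply z
      have h1 : IsOpen ((fun g : X → Bool => g x) ⁻¹' {true}) :=
        (isOpen_discrete _).preimage (hc x)
      have h2 : IsOpen ((fun g : X → Bool => g y) ⁻¹' {false}) :=
        (isOpen_discrete _).preimage (hc y)
      exact h1.inter h2
    obtain ⟨g, ⟨hgx, hgy⟩, ⟨⟨g', hg'⟩, rfl⟩⟩ := h.inter_open_nonempty _ hO
      ⟨fun z => decide (z = x), by simp, by simpa using hxy.symm⟩
    refine ⟨g' ⁻¹' {true}, (isClopen_discrete _).preimage hg', hgx, ?_⟩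
    intro h1
    have h2 : g' y = true := h1
    have h3 : g' y = false := hgy
    simp [h2] at h3
end

section
/- If X is a totally disconnected Tychonoff space, then for every topological space Y the set C_p(X, Y) is dense in the product space Y^X. -/
open Set Topology

theorem exists_continuous_eqOn_finset {X Y : Type*} [TopologicalSpace X]
    [TotallySeparatedSpace X] [TopologicalSpace Y] (g : X → Y) (F : Finset X) :
    ∃ f : X → Y, Continuous f ∧ ∀ x ∈ F, f x = g x := by
  classical
  induction F using Finset.induction_on with
  | empty =>
    rcases isEmpty_or_nonempty X with h | ⟨⟨x⟩⟩
    · exact ⟨g, continuous_of_const fun x => (h.false x).elim, by simp⟩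
    · exact ⟨fun _ => g x, continuous_const, by simp⟩
  | insert a F ha ih =>
    obtain ⟨f, hf, hfg⟩ := ih
    have key : ∀ y : X, ∃ U : Set X, IsClopen U ∧ a ∈ U ∧ (y ≠ a → y ∉ U) := by
      intro y
      by_cases hy : y = a
      · exact ⟨Set.univ, isClopen_univ, Set.mem_univ _, fun h => (h hy).elim⟩
      · obtain ⟨U, hU, h1, h2⟩ := exists_isClopen_of_totally_separated (Ne.symm hy)
        exact ⟨U, hU, h1, fun _ => h2⟩
    choose U hU haU hyU using key
    have hV : IsClopen (⋂ y ∈ F, U y) := isClopen_biInter_finset fun y _ => hU y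
    refine ⟨(⋂ y ∈ F, U y).piecewise (fun _ => g a) f, ?_, ?_⟩
    · refine Continuous.piecewise ?_ continuous_const hf
      intro x hx
      rw [hV.frontier_eq] at hx
      exact hx.elim
    · intro x hx
      rcases Finset.mem_insert.1 hx with rfl | hx
      · rw [Set.piecewise_eq_of_mem]
        exact Set.mem_iInter₂.2 fun y _ => haU y
      · rw [Set.piecewise_eq_of_notMem, hfg x hx]
        intro h
        have hne : x ≠ a := fun e => ha (e ▸ hx)
        exact hyU x hne (Set.mem_iInter₂.1 h x hx)

/-- If `X` is a totally disconnected (totally separated) Tychonoff space, then for every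
topological space `Y` the set `C_p(X, Y)` is dense in the product space `Y^X`. -/
theorem statement16 (X : Type*) [TopologicalSpace X] [T1Space X] [CompletelyRegularSpace X]
    [TotallySeparatedSpace X] (Y : Type*) [TopologicalSpace Y] :
    Dense (Set.range (Subtype.val : Cp X Y → X → Y)) := by
  intro g
  rw [mem_closure_iff]
  intro O hO hg
  obtain ⟨F, u, hu, hsub⟩ := isOpen_pi_iff.1 hO g hg
  obtain ⟨f, hf, hfg⟩ := exists_continuous_eqOn_finset g F
  refine ⟨f, hsub ?_, ⟨⟨f, hf⟩, rfl⟩⟩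
  intro x hx
  rw [hfg x hx]
  exact (hu x hx).2
end

section
/- Let X be an infinite totally disconnected Tychonoff space and let Y be a topological space such that C_p(X, Y) is a Baire space. Then for every sequence (V_m)_{m∈ℕ} of nonempty open subsets of Y there exists a continuous function f : X → Y such that f(X) ∩ V_m ≠ ∅ for every m ∈ ℕ. -/
open Set Topology

/-- Let `X` be an infinite totally disconnected (totally separated) Tychonoff space and
`Y` a space with `C_p(X, Y)` Baire. Then for every sequence `(V m)` of nonempty open
subsets of `Y` there is a continuous `f : X → Y` whose range meets every `V m`. -/
theorem statement17 (X Y : Type*) [TopologicalSpace X] [T1Space X] [CompletelyRegularSpace X]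
    [TotallySeparatedSpace X] [Infinite X] [TopologicalSpace Y]
    (hBaire : BaireSpace (Cp X Y)) :
    ∀ V : ℕ → Set Y, (∀ m, IsOpen (V m)) → (∀ m, (V m).Nonempty) →
      ∃ f : X → Y, Continuous f ∧ ∀ m, (Set.range f ∩ V m).Nonempty := by
  classical
  intro V hV hne
  have hopen : ∀ m, IsOpen {f : Cp X Y | (Set.range f.1 ∩ V m).Nonempty} := by
    intro m
    have : {f : Cp X Y | (Set.range f.1 ∩ V m).Nonempty} = ⋃ x : X, {f : Cp X Y | f.1 x ∈ V m} := by
      ext f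
      simp only [Set.mem_ofPred_eq, Set.mem_iUnion]
      constructor
      · rintro ⟨_, ⟨x, rfl⟩, h⟩
        exact ⟨x, h⟩
      · rintro ⟨x, h⟩
        exact ⟨_, ⟨x, rfl⟩, h⟩
    rw [this]
    exact isOpen_iUnion fun x =>
      (hV m).preimage ((continuous_apply x).comp continuous_subtype_val)
  have hdense : ∀ m, Dense {f : Cp X Y | (Set.range f.1 ∩ V m).Nonempty} := by
    intro m
    rw [dense_iff_inter_open]
    rintro U hU ⟨f, hf⟩
    obtain ⟨W, hW, rfl⟩ := isOpen_induced_iff.1 hU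
    obtain ⟨F, u, hu, hFW⟩ := isOpen_pi_iff.1 hW f.1 hf
    obtain ⟨x, hx⟩ := Infinite.exists_notMem_finset F
    have hsep : ∀ a : X, ∃ C : Set X, IsClopen C ∧ x ∈ C ∧ (a ∈ F → a ∉ C) := by
      intro a
      by_cases ha : a ∈ F
      · have hxa : x ≠ a := fun h => hx (h ▸ ha)
        obtain ⟨C, hC, h1, h2⟩ := exists_isClopen_of_totally_separated hxa
        exact ⟨C, hC, h1, fun _ => h2⟩
      · exact ⟨Set.univ, isClopen_univ, trivial, fun h => absurd h ha⟩
    choose C hC hxC haC using hsep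
    let D : Set X := ⋂ a ∈ F, C a
    have hD : IsClopen D := isClopen_biInter_finset fun a _ => hC a
    have hxD : x ∈ D := Set.mem_iInter₂.2 fun a _ => hxC a
    have hFD : ∀ a ∈ F, a ∉ D := fun a ha h => haC a ha (Set.mem_iInter₂.1 h a ha)
    obtain ⟨y, hy⟩ := hne m
    have hg : Continuous (D.piecewise (fun _ => y) f.1) := by
      refine Continuous.piecewise ?_ continuous_const f.2
      intro a ha
      rw [hD.frontier_eq] at ha
      exact absurd ha (Set.notMem_empty a)
    refine ⟨⟨_, hg⟩, hFW ?_, y, ⟨x, ?_⟩, hy⟩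
    · intro a ha
      show D.piecewise (fun _ => y) f.1 a ∈ u a
      rw [Set.piecewise_eq_of_notMem _ _ _ (hFD a ha)]
      exact (hu a ha).2
    · exact Set.piecewise_eq_of_mem D (fun _ => y) f.1 hxD
  have hd := dense_iInter_of_isOpen_nat hopen hdense
  obtain ⟨y, -⟩ := hne 0
  haveI : Nonempty (Cp X Y) := ⟨⟨fun _ => y, continuous_const⟩⟩
  obtain ⟨f, hf⟩ := hd.nonempty
  exact ⟨f.1, f.2, fun m => Set.mem_iInter.1 hf m⟩
end

section
/- Let K be a compact topological space, Y a Hausdorff space, and f : K → Y a continuous surjective irreducible map. Then f is almost open. -/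
open Set Topology Function

/-- A map is almost open if the image of every nonempty open set has nonempty interior. -/
def AlmostOpenMap {K M : Type*} [TopologicalSpace K] [TopologicalSpace M] (ψ : K → M) : Prop :=
  ∀ U : Set K, IsOpen U → U.Nonempty → (interior (ψ '' U)).Nonempty

/-- A surjective map `f : X → Y` is irreducible if no proper closed subset of `X`
maps onto `Y`. -/
def IrreducibleMap {X Y : Type*} [TopologicalSpace X] [TopologicalSpace Y] (f : X → Y) : Prop :=
  ∀ Z : Set X, IsClosed Z → f '' Z = Set.univ → Z = Set.univ

/-- A continuous surjective irreducible map from a compact space onto a Hausdorff space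
is almost open. -/
theorem statement19 (K Y : Type*) [TopologicalSpace K] [CompactSpace K]
    [TopologicalSpace Y] [T2Space Y]
    (f : K → Y) (hcont : Continuous f) (hsurj : Surjective f) (hirr : IrreducibleMap f) :
    AlmostOpenMap f := by
  intro U hU hne
  have hcl : IsClosed (f '' Uᶜ) := (hU.isClosed_compl.isCompact.image hcont).isClosed
  have hproper : f '' Uᶜ ≠ Set.univ := by
    intro h
    have h2 := hirr _ hU.isClosed_compl h
    obtain ⟨x, hx⟩ := hne
    have hx2 : x ∈ Uᶜ := h2 ▸ Set.mem_univ x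
    exact hx2 hx
  obtain ⟨y, hy⟩ := (Set.ne_univ_iff_exists_notMem _).1 hproper
  refine ⟨y, mem_interior.2 ⟨(f '' Uᶜ)ᶜ, ?_, hcl.isOpen_compl, hy⟩⟩
  intro z hz
  obtain ⟨x, rfl⟩ := hsurj z
  by_contra hn
  exact hz ⟨x, fun hx => hn ⟨x, hx, rfl⟩, rfl⟩
end
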